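/- Let K be a field of characteristic zero. Consider the polynomial ring R = K[X_{ij} : i ∈ {1,2}, j ∈ {1,2,3}] in the entries of a 2×3 matrix, and for g ∈ SL(2,K) the K-algebra automorphism α_g of R determined by α_g(X_{ij}) = Σ_{l=1}^{2} g_{il} X_{lj}. Then the invariant algebra {f ∈ R : α_g(f) = f for all g ∈ SL(2,K)} is generated as a K-algebra by the three 2×2 minors Δ₁₂ = X₁₁X₂₂ − X₁₂X₂₁, Δ₂₃ = X₁₂X₂₃ − X₁₃X₂₂, and Δ₁₃ = X₁₁X₂₃ − X₁₃X₂₁. -/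

import Mathlib

open MvPolynomial Matrix

/-- The maximal minors `Δ₁₂`, `Δ₂₃`, `Δ₁₃` of the generic 2×3 matrix. -/
noncomputable def genericMinors (K : Type*) [CommRing K] :
    Fin 3 → MvPolynomial (Fin 2 × Fin 3) K :=
  ![X (0, 0) * X (1, 1) - X (0, 1) * X (1, 0),
    X (0, 1) * X (1, 2) - X (0, 2) * X (1, 1),
    X (0, 0) * X (1, 2) - X (0, 2) * X (1, 0)]

/-- The maximal minors `Δ₁₂`, `Δ₂₃`, `Δ₁₃` of a 2×3 matrix, given by its entries. -/
def minorsAt {K : Type*} [CommRing K] (m : Fin 2 × Fin 3 → K) : Fin 3 → K :=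
  ![m (0, 0) * m (1, 1) - m (0, 1) * m (1, 0),
    m (0, 1) * m (1, 2) - m (0, 2) * m (1, 1),
    m (0, 0) * m (1, 2) - m (0, 2) * m (1, 0)]

/-- The representative `!![1, 0, -Δ₂₃ / Δ₁₂; 0, Δ₁₂, Δ₁₃]` of the `SL(2)`-orbit of a matrix
with `Δ₁₂ ≠ 0`. -/
def orbitNormalForm {K : Type*} [Field K] (m : Fin 2 × Fin 3 → K) : Fin 2 × Fin 3 → K :=
  fun p => !![1, 0, -minorsAt m 1 / minorsAt m 0; 0, minorsAt m 0, minorsAt m 2] p.1 p.2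

theorem eval_aeval_genericMinors {K : Type*} [CommRing K] (m : Fin 2 × Fin 3 → K)
    (P : MvPolynomial (Fin 3) K) :
    eval m (aeval (genericMinors K) P) = eval (minorsAt m) P := by
  induction P using MvPolynomial.induction_on with
  | C a => simp
  | add p q hp hq => simp only [map_add, hp, hq]
  | mul_X p i hp =>
    simp only [map_mul, aeval_X, eval_X, hp]
    congr 1
    fin_cases i <;> simp [genericMinors, minorsAt]

theorem genericMinors_zero_ne_zero (K : Type*) [Field K] : genericMinors K 0 ≠ 0 := by
  intro h
  have := congrArg
    (eval fun p : Fin 2 × Fin 3 => (!![1, 0, 0; 0, 1, 0] : Matrix (Fin 2) (Fin 3) K) p.1 p.2) h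
  simp [genericMinors] at this

theorem exists_minorsAt_pow_mul_eval_orbitNormalForm {K : Type*} [Field K]
    (f : MvPolynomial (Fin 2 × Fin 3) K) :
    ∃ (n : ℕ) (P : MvPolynomial (Fin 3) K), ∀ m : Fin 2 × Fin 3 → K, minorsAt m 0 ≠ 0 →
      minorsAt m 0 ^ n * eval (orbitNormalForm m) f = eval (minorsAt m) P := by
  induction f using MvPolynomial.induction_on with
  | C a => exact ⟨0, C a, by simp⟩
  | add p q hp hq =>
    obtain ⟨n, P, hP⟩ := hp
    obtain ⟨k, Q, hQ⟩ := hq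
    refine ⟨n + k, X 0 ^ k * P + X 0 ^ n * Q, fun m hm => ?_⟩
    simp only [map_add, map_mul, map_pow, eval_X, ← hP m hm, ← hQ m hm]
    ring
  | mul_X p i hp =>
    obtain ⟨n, P, hP⟩ := hp
    obtain ⟨Q, hQ⟩ : ∃ Q : MvPolynomial (Fin 3) K, ∀ m : Fin 2 × Fin 3 → K,
        minorsAt m 0 ≠ 0 → minorsAt m 0 * orbitNormalForm m i = eval (minorsAt m) Q := by
      refine ⟨!![X 0, 0, -X 1; 0, X 0 * X 0, X 0 * X 2] i.1 i.2, fun m hm => ?_⟩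
      obtain ⟨i, j⟩ := i
      fin_cases i <;> fin_cases j <;> simp [orbitNormalForm]
      field_simp
    refine ⟨n + 1, P * Q, fun m hm => ?_⟩
    simp only [map_mul, eval_X, ← hP m hm, ← hQ m hm]
    ring

/-- The action of `g ∈ SL(2, K)` on polynomial functions on 2×3 matrices. -/
noncomputable abbrev substAction {K : Type*} [CommRing K] (g : SpecialLinearGroup (Fin 2) K) :
    MvPolynomial (Fin 2 × Fin 3) K →ₐ[K] MvPolynomial (Fin 2 × Fin 3) K :=
  aeval (fun p : Fin 2 × Fin 3 =>
    ∑ l : Fin 2, C ((g : Matrix (Fin 2) (Fin 2) K) p.1 l) * X (l, p.2))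

theorem eval_substAction {K : Type*} [CommRing K] (g : SpecialLinearGroup (Fin 2) K)
    (m : Fin 2 × Fin 3 → K) (f : MvPolynomial (Fin 2 × Fin 3) K) :
    eval m (substAction g f) =
      eval (fun p => ∑ l : Fin 2, (g : Matrix (Fin 2) (Fin 2) K) p.1 l * m (l, p.2)) f := by
  induction f using MvPolynomial.induction_on with
  | C a => simp
  | add p q hp hq => simp only [map_add, hp, hq]
  | mul_X p i hp => simp only [map_mul, hp, aeval_X, eval_X, map_sum, eval_C]

theorem substAction_genericMinors {K : Type*} [CommRing K] (g : SpecialLinearGroup (Fin 2) K)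
    (i : Fin 3) : substAction g (genericMinors K i) = genericMinors K i := by
  have h : (C (g.1 0 0) * C (g.1 1 1) - C (g.1 0 1) * C (g.1 1 0) :
      MvPolynomial (Fin 2 × Fin 3) K) = 1 := by
    rw [← C_mul, ← C_mul, ← C_sub, ← Matrix.det_fin_two, g.2, C_1]
  fin_cases i <;> simp [genericMinors, substAction, Fin.sum_univ_two]
  · linear_combination (X (0, 0) * X (1, 1) - X (0, 1) * X (1, 0)) * h
  · linear_combination (X (0, 1) * X (1, 2) - X (0, 2) * X (1, 1)) * h
  · linear_combination (X (0, 0) * X (1, 2) - X (0, 2) * X (1, 0)) * h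

theorem exists_specialLinearGroup_smul_eq_orbitNormalForm {K : Type*} [Field K]
    (m : Fin 2 × Fin 3 → K) (hm : minorsAt m 0 ≠ 0) :
    ∃ g : SpecialLinearGroup (Fin 2) K,
      (fun p : Fin 2 × Fin 3 =>
        ∑ l : Fin 2, (g : Matrix (Fin 2) (Fin 2) K) p.1 l * m (l, p.2)) = orbitNormalForm m := by
  have h0 : minorsAt m 0 = m (0, 0) * m (1, 1) - m (0, 1) * m (1, 0) := rfl
  have h1 : minorsAt m 1 = m (0, 1) * m (1, 2) - m (0, 2) * m (1, 1) := rfl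
  have h2 : minorsAt m 2 = m (0, 0) * m (1, 2) - m (0, 2) * m (1, 0) := rfl
  refine ⟨⟨!![m (1, 1) / minorsAt m 0, -m (0, 1) / minorsAt m 0; -m (1, 0), m (0, 0)], ?_⟩, ?_⟩
  · rw [det_fin_two_of]
    field_simp
    rw [h0]
    ring
  · ext ⟨i, j⟩
    fin_cases i <;> fin_cases j <;>
      simp [orbitNormalForm, Fin.sum_univ_two] <;> field_simp <;> grind

theorem exists_genericMinors_pow_mul_eq_aeval {K : Type*} [Field K] [Infinite K]
    {f : MvPolynomial (Fin 2 × Fin 3) K}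
    (hf : ∀ g : SpecialLinearGroup (Fin 2) K, substAction g f = f) :
    ∃ (n : ℕ) (P : MvPolynomial (Fin 3) K),
      genericMinors K 0 ^ n * f = aeval (genericMinors K) P := by
  obtain ⟨n, P, hP⟩ := exists_minorsAt_pow_mul_eval_orbitNormalForm f
  refine ⟨n, P, mul_left_cancel₀ (genericMinors_zero_ne_zero K) (MvPolynomial.funext fun m => ?_)⟩
  have h0 : eval m (genericMinors K 0) = minorsAt m 0 := by simp [genericMinors, minorsAt]
  simp only [map_mul, map_pow, eval_aeval_genericMinors, h0]
  by_cases hm : minorsAt m 0 = 0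
  · simp [hm]
  · obtain ⟨g, hg⟩ := exists_specialLinearGroup_smul_eq_orbitNormalForm m hm
    rw [← hP m hm, ← hg, ← eval_substAction, hf]

theorem X_zero_dvd_of_eval_eq_zero {K : Type*} [Field K] [Infinite K]
    {P : MvPolynomial (Fin 3) K} (hP : ∀ a b : K, eval ![0, a, b] P = 0) : X 0 ∣ P := by
  have key : ∀ Q : MvPolynomial (Fin 3) K,
      X 0 ∣ Q - aeval (![0, X 1, X 2] : Fin 3 → MvPolynomial (Fin 3) K) Q := by
    intro Q
    induction Q using MvPolynomial.induction_on with
    | C a => simp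
    | add p q hp hq =>
      rw [map_add, add_sub_add_comm]
      exact dvd_add hp hq
    | mul_X p i hp =>
      fin_cases i
      · simp
      · simpa [← sub_mul] using hp.mul_right (X 1)
      · simpa [← sub_mul] using hp.mul_right (X 2)
  have hzero : aeval (![0, X 1, X 2] : Fin 3 → MvPolynomial (Fin 3) K) P = 0 := by
    refine MvPolynomial.funext fun m => ?_
    rw [map_zero, ← hP (m 1) (m 2), aeval_def, algebraMap_eq, eval_eval₂]
    have h : (eval m).comp C = RingHom.id K := by ext; simp
    rw [h, ← eval₂_id]
    congr 1
    ext i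
    fin_cases i <;> simp
  simpa only [hzero, sub_zero] using key P

theorem mem_range_aeval_of_genericMinors_mul_mem {K : Type*} [Field K] [Infinite K]
    {f : MvPolynomial (Fin 2 × Fin 3) K}
    (hf : genericMinors K 0 * f ∈ (aeval (R := K) (genericMinors K)).range) :
    f ∈ (aeval (R := K) (genericMinors K)).range := by
  obtain ⟨P, hP⟩ := hf
  replace hP : aeval (genericMinors K) P = genericMinors K 0 * f := hP
  obtain ⟨Q, rfl⟩ : X 0 ∣ P := by
    refine X_zero_dvd_of_eval_eq_zero fun a b => ?_
    have h := congrArg (eval fun p : Fin 2 × Fin 3 => !![b, a, 0; 0, 0, 1] p.1 p.2) hP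
    rw [eval_aeval_genericMinors] at h
    simpa [minorsAt, genericMinors] using h
  rw [map_mul, aeval_X] at hP
  exact ⟨Q, mul_left_cancel₀ (genericMinors_zero_ne_zero K) hP⟩

theorem mem_range_aeval_of_genericMinors_pow_mul_mem {K : Type*} [Field K] [Infinite K]
    {f : MvPolynomial (Fin 2 × Fin 3) K} (n : ℕ)
    (hf : genericMinors K 0 ^ n * f ∈ (aeval (R := K) (genericMinors K)).range) :
    f ∈ (aeval (R := K) (genericMinors K)).range := by
  induction n with
  | zero => simpa using hf
  | succ n ih =>
    rw [pow_succ', mul_assoc] at hf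
    exact ih (mem_range_aeval_of_genericMinors_mul_mem hf)

/-- **First fundamental theorem for `SL(2)` acting on 2×3 matrices.**
Let `K` be a field of characteristic zero, `R = K[X_{ij}]` the polynomial ring
in the entries of a 2×3 matrix, and for `g ∈ SL(2,K)` let `α_g` be the algebra
endomorphism with `α_g(X_{ij}) = Σ_l g_{il} X_{lj}`. A polynomial is invariant
under all `α_g` iff it lies in the `K`-subalgebra generated by the three
2×2 minors `Δ₁₂`, `Δ₂₃`, `Δ₁₃`. -/
theorem sl2_invariants_of_two_by_three_matrices
    (K : Type*) [Field K] [CharZero K] (f : MvPolynomial (Fin 2 × Fin 3) K) :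
    (∀ g : SpecialLinearGroup (Fin 2) K,
        aeval (fun p : Fin 2 × Fin 3 =>
          ∑ l : Fin 2, C ((g : Matrix (Fin 2) (Fin 2) K) p.1 l) * X (l, p.2)) f = f) ↔
      f ∈ Algebra.adjoin K
        ({X (0, 0) * X (1, 1) - X (0, 1) * X (1, 0),
          X (0, 1) * X (1, 2) - X (0, 2) * X (1, 1),
          X (0, 0) * X (1, 2) - X (0, 2) * X (1, 0)} :
            Set (MvPolynomial (Fin 2 × Fin 3) K)) := by
  have hset : ({X (0, 0) * X (1, 1) - X (0, 1) * X (1, 0),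
      X (0, 1) * X (1, 2) - X (0, 2) * X (1, 1),
      X (0, 0) * X (1, 2) - X (0, 2) * X (1, 0)} : Set (MvPolynomial (Fin 2 × Fin 3) K)) =
      Set.range (genericMinors K) := by
    simp only [genericMinors, range_cons, range_empty, Set.union_empty, Set.singleton_union]
  rw [hset]
  constructor
  · intro hf
    obtain ⟨n, P, hP⟩ := exists_genericMinors_pow_mul_eq_aeval hf
    rw [Algebra.adjoin_range_eq_range_aeval]
    exact mem_range_aeval_of_genericMinors_pow_mul_mem n ⟨P, hP.symm⟩
  · intro hf g
    have hle : Algebra.adjoin K (Set.range (genericMinors K)) ≤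
        AlgHom.equalizer (substAction g) (AlgHom.id K _) := by
      rw [Algebra.adjoin_le_iff]
      rintro _ ⟨i, rfl⟩
      exact substAction_genericMinors g i
    exact hle hf
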